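/- Fix an integer n ≥ 1, a real ε > 0, a real σ > 0, and ν ∈ ℂ with Re ν ≥ −1/2; set μ = ν + σ. Let ζ : (0,∞)ⁿ → ℂ be infinitely differentiable with ζ(ω) = 0 whenever some coordinate ω_i > ε, and suppose T^{μ}_p(ζ) < ∞ for every multi-index p (i.e., ζ ∈ 𝒜_{μ,ε}). Then for all Z₁,…,Z_n ∈ ℂ \ (−∞, 0]: ∫_{(0,∞)ⁿ} (N_μ ζ)(ω) · ∏_{k=1}^n (ω_k Z_k)^{1/2} · J_{μ+1}(ω_k Z_k) dω = (−1)ⁿ · (∏_{k=1}^n Z_k) · ∫_{(0,∞)ⁿ} ζ(ω) · ∏_{k=1}^n (ω_k Z_k)^{1/2} · J_{μ}(ω_k Z_k) dω, where (ω_kZ_k)^{1/2} is the principal square root; i.e., ℋ_{μ+1}(N_μ ζ)(Z) = (−1)ⁿ[Z]·ℋ_{μ}(ζ)(Z). -/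

import Mathlib

/-!
The rule is integration by parts in each coordinate. Put `g(ω) = (∏ ωᵢ)^{-μ-1/2} ζ(ω)`. On the
orthant `(ω_k Z_k)^{1/2} = ω_k^{1/2} Z_k^{1/2}`, so the left integrand is `∂₁⋯∂ₙ g` times
`∏_k b(ω_k)`, where `b(t) = Z_k^{1/2} t^{μ+1} J_{μ+1}(t Z_k)`. The Bessel identity
`(t^{μ+1} J_{μ+1}(tz))' = z t^{μ+1} J_μ(tz)` (`kern_hasDerivAt`) then moves all `n` derivatives to
the kernel, with one factor `-Z_k` for each coordinate (`ibp`, `ibp_list`).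

* Bessel side: `J_a(z) = (z/2)^a φ_a(-(z/2)²)` with `φ_a` entire, `φ_a' = φ_{a+1}` and
  `φ_a(x) = (a+1) φ_{a+1}(x) + x φ_{a+2}(x)`. Since `Re μ > -1/2`, the exponents `2μ+1` and `2μ+2`
  have positive real part, so both kernels extend continuously to `t = 0`, and `b(0) = 0`.
* Integrability: `g` and its partial mixed derivatives `∂_S g` vanish outside the cube `(0, ε]ⁿ`
  and are bounded, because `∂_S g = ∏_{i ∈ S} ωᵢ · ∏_{i ∈ S} (ωᵢ⁻¹ ∂ᵢ) g` and the second factor is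
  controlled by the seminorm `T^μ_p` with `p` the indicator of `S` (`listW_eq`, `listD_bounded`).
  Every integrand is then bounded with bounded support, so Fubini applies and the boundary terms
  vanish: at `0` because `b(0) = 0`, at infinity because `g` vanishes there.
-/

open Complex MeasureTheory
open scoped ENNReal NNReal

/-- Complex Bessel function of the first kind, defined by its series with
principal complex powers; `1/Γ` is `0` at the poles of `Γ`. -/
noncomputable def besselJ (ν z : ℂ) : ℂ :=
  ∑' s : ℕ, ((-1 : ℂ) ^ s / ((s.factorial : ℂ) * Complex.Gamma (ν + s + 1))) *
    (z / 2) ^ (ν + 2 * s)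

/-- The open positive orthant `(0,∞)ⁿ`. -/
def posOrthant (n : ℕ) : Set (Fin n → ℝ) := {ω | ∀ i, 0 < ω i}

/-- The operator `ω_i⁻¹ ∂/∂ω_i` (partial derivative in the `i`-th coordinate,
divided by `ω_i`). -/
noncomputable def wDeriv (n : ℕ) (i : Fin n) (f : (Fin n → ℝ) → ℂ) :
    (Fin n → ℝ) → ℂ :=
  fun ω => (ω i)⁻¹ • fderiv ℝ f ω (Pi.single i 1)

/-- The iterated operator `∏_{i=1}^n (ω_i⁻¹ ∂/∂ω_i)^{p_i}`. -/
noncomputable def multiWDeriv (n : ℕ) (p : Fin n → ℕ) (f : (Fin n → ℝ) → ℂ) :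
    (Fin n → ℝ) → ℂ :=
  (List.finRange n).foldr (fun i g => (wDeriv n i)^[p i] g) f

/-- Multiplication by the weight `(∏ᵢ ωᵢ)^{−μ−1/2}` (positive real base,
principal power). -/
noncomputable def weightFn (n : ℕ) (μ : ℂ) (f : (Fin n → ℝ) → ℂ) :
    (Fin n → ℝ) → ℂ :=
  fun ω => (((∏ i, ω i : ℝ) : ℂ) ^ (-μ - 1 / 2)) * f ω

/-- The Zemanian-type seminorm
`T^μ_p(f) = sup_{ω ∈ (0,∞)ⁿ} |∏ᵢ (ωᵢ⁻¹∂ᵢ)^{pᵢ} ((∏ᵢωᵢ)^{−μ−1/2} f(ω))|`. -/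
noncomputable def Tsem (n : ℕ) (μ : ℂ) (p : Fin n → ℕ) (f : (Fin n → ℝ) → ℂ) : ℝ≥0∞ :=
  ⨆ ω ∈ posOrthant n, (‖multiWDeriv n p (weightFn n μ f) ω‖₊ : ℝ≥0∞)

/-- Membership in the testing space `𝒜_{μ,ε}`: smooth on `(0,∞)ⁿ`, vanishing as soon
as some coordinate exceeds `ε`, and all seminorms `T^μ_p` finite. -/
def memA (n : ℕ) (ε : ℝ) (μ : ℂ) (f : (Fin n → ℝ) → ℂ) : Prop :=
  ContDiffOn ℝ (⊤ : ℕ∞) f (posOrthant n) ∧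
  (∀ ω ∈ posOrthant n, (∃ i, ε < ω i) → f ω = 0) ∧
  ∀ p : Fin n → ℕ, Tsem n μ p f < ⊤

/-- The partial derivative `∂/∂ω_i`. -/
noncomputable def pDeriv (n : ℕ) (i : Fin n) (f : (Fin n → ℝ) → ℂ) :
    (Fin n → ℝ) → ℂ :=
  fun ω => fderiv ℝ f ω (Pi.single i 1)

/-- The mixed derivative `∂ⁿ/∂ω₁⋯∂ω_n`. -/
noncomputable def mixedDeriv (n : ℕ) (f : (Fin n → ℝ) → ℂ) : (Fin n → ℝ) → ℂ :=
  (List.finRange n).foldr (fun i g => pDeriv n i g) f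

/-- The differential operator
`(N_μ f)(ω) = (∏ᵢωᵢ)^{μ+1/2} ∂ⁿ/∂ω₁⋯∂ω_n ((∏ᵢωᵢ)^{−μ−1/2} f(ω))`. -/
noncomputable def Nop (n : ℕ) (μ : ℂ) (f : (Fin n → ℝ) → ℂ) : (Fin n → ℝ) → ℂ :=
  fun ω => (((∏ i, ω i : ℝ) : ℂ) ^ (μ + 1 / 2)) * mixedDeriv n (weightFn n μ f) ω

section

open Set Filter Topology

/-! ### The entire factor of the Bessel function -/

/-- The Taylor coefficient `1 / (s! Γ(a + s + 1))`. -/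
noncomputable def phiCoeff (a : ℂ) (s : ℕ) : ℂ :=
  ((s.factorial : ℂ) * Complex.Gamma (a + s + 1))⁻¹

/-- The entire function `φ_a(x) = ∑ xˢ / (s! Γ(a + s + 1))`, normalised so that
`J_a(z) = (z/2)^a φ_a(-(z/2)²)`. -/
noncomputable def phi (a x : ℂ) : ℂ := ∑' s : ℕ, phiCoeff a s * x ^ s

lemma gamma_arg_re {a : ℂ} (ha : -1 < a.re) (s : ℕ) : 0 < (a + s + 1).re := by
  simp only [Complex.add_re, Complex.natCast_re, Complex.one_re]
  have : (0 : ℝ) ≤ s := Nat.cast_nonneg s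
  linarith

lemma gamma_arg_ne {a : ℂ} (ha : -1 < a.re) (s : ℕ) : a + s + 1 ≠ 0 := by
  intro h
  have := gamma_arg_re ha s
  rw [h] at this
  simp at this

lemma phiCoeff_ne {a : ℂ} (ha : -1 < a.re) (s : ℕ) : phiCoeff a s ≠ 0 :=
  inv_ne_zero (mul_ne_zero (by exact_mod_cast s.factorial_ne_zero)
    (Complex.Gamma_ne_zero_of_re_pos (gamma_arg_re ha s)))

lemma phiCoeff_succ_mul (a : ℂ) (s : ℕ) :
    phiCoeff a (s + 1) * (s + 1) = phiCoeff (a + 1) s := by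
  have h : (s : ℂ) + 1 ≠ 0 := by exact_mod_cast s.succ_ne_zero
  have e : a + ((s + 1 : ℕ) : ℂ) + 1 = a + 1 + s + 1 := by push_cast; ring
  unfold phiCoeff
  rw [e, Nat.factorial_succ]
  push_cast
  rw [mul_assoc, mul_inv, mul_comm, ← mul_assoc, mul_inv_cancel₀ h, one_mul]

lemma phiCoeff_eq {a : ℂ} (ha : -1 < a.re) (s : ℕ) :
    phiCoeff a s = (a + s + 1) * phiCoeff (a + 1) s := by
  have e : a + 1 + (s : ℂ) + 1 = (a + s + 1) + 1 := by ring
  have h := gamma_arg_ne ha s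
  unfold phiCoeff
  rw [e, Complex.Gamma_add_one _ h, mul_left_comm, mul_inv (a + s + 1),
    mul_inv_cancel_left₀ h]

lemma phiCoeff_succ {a : ℂ} (ha : -1 < a.re) (s : ℕ) :
    phiCoeff a (s + 1) = phiCoeff a s * ((s + 1) * (a + s + 1))⁻¹ := by
  have h := gamma_arg_ne ha s
  have h1 : (s : ℂ) + 1 ≠ 0 := by exact_mod_cast s.succ_ne_zero
  rw [phiCoeff_eq ha s, ← phiCoeff_succ_mul a s]
  field_simp

lemma phi_summable {a : ℂ} (ha : -1 < a.re) (x : ℂ) :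
    Summable fun s : ℕ => phiCoeff a s * x ^ s := by
  rcases eq_or_ne x 0 with rfl | hx
  · refine summable_of_ne_finset_zero (s := {0}) fun s hs => ?_
    simp at hs
    simp [hs]
  refine summable_of_ratio_test_tendsto_lt_one (l := 0) one_pos
    (Eventually.of_forall fun s => mul_ne_zero (phiCoeff_ne ha s) (pow_ne_zero _ hx)) ?_
  have key : ∀ s : ℕ, ‖phiCoeff a (s + 1) * x ^ (s + 1)‖ / ‖phiCoeff a s * x ^ s‖
      = ‖x‖ * (((s : ℝ) + 1)⁻¹ * ‖a + s + 1‖⁻¹) := by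
    intro s
    have h1 : ‖phiCoeff a s‖ ≠ 0 := norm_ne_zero_iff.2 (phiCoeff_ne ha s)
    have h2 : ‖x‖ ≠ 0 := norm_ne_zero_iff.2 hx
    have h3 : ‖(s : ℂ) + 1‖ = s + 1 := by
      exact_mod_cast Complex.norm_natCast (s + 1)
    rw [phiCoeff_succ ha, norm_mul, norm_mul, norm_mul, norm_inv, norm_mul, norm_pow, norm_pow, h3,
      mul_inv]
    have h4 : ‖x‖ ^ s ≠ 0 := pow_ne_zero _ h2
    rw [div_eq_iff (mul_ne_zero h1 h4)]
    ring
  simp_rw [key]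
  have hc : 0 < a.re + 1 := by linarith
  have h0 : Tendsto (fun s : ℕ => ‖x‖ * (1 / ((s : ℝ) + 1) * (a.re + 1)⁻¹)) atTop (𝓝 0) := by
    simpa using (tendsto_one_div_add_atTop_nhds_zero_nat.mul_const (a.re + 1)⁻¹).const_mul ‖x‖
  refine squeeze_zero (fun s => by positivity) (fun s => ?_) h0
  rw [one_div]
  gcongr
  refine le_trans ?_ (Complex.re_le_norm _)
  simp

lemma phi_hasDerivAt {a : ℂ} (ha : -1 < a.re) (x : ℂ) :
    HasDerivAt (phi a) (phi (a + 1) x) x := by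
  have ha' : -1 < (a + 1).re := by simp; linarith
  set R : ℝ := ‖x‖ + 1
  have hR : (0 : ℝ) < R := by positivity
  -- The termwise derivative vanishes at `s = 0` and is the series of `φ_{a+1}` shifted by one.
  have hsh : ∀ (y : ℂ) (s : ℕ),
      phiCoeff a (s + 1) * (((s + 1 : ℕ) : ℂ) * y ^ (s + 1 - 1)) = phiCoeff (a + 1) s * y ^ s := by
    intro y s
    rw [← phiCoeff_succ_mul]
    push_cast
    ring
  have hsum : ∀ y : ℂ, Summable fun s : ℕ => phiCoeff a s * ((s : ℂ) * y ^ (s - 1)) := fun y => by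
    rw [← summable_nat_add_iff 1]
    simp_rw [hsh]
    exact phi_summable ha' y
  have htsum : ∑' s : ℕ, phiCoeff a s * ((s : ℂ) * x ^ (s - 1)) = phi (a + 1) x := by
    rw [(hsum x).tsum_eq_zero_add]
    simp_rw [hsh]
    simp [phi]
  rw [← htsum]
  refine hasDerivAt_tsum_of_isPreconnected (t := Metric.ball (0 : ℂ) R) (y₀ := x)
    (hsum (R : ℂ)).norm Metric.isOpen_ball (convex_ball _ _).isPreconnected
    (fun s y _ => (hasDerivAt_pow s y).const_mul _) (fun s y hy => ?_) ?_ (phi_summable ha x) ?_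
  · have hy' : ‖y‖ ≤ R := (mem_ball_zero_iff.1 hy).le
    simp only [norm_mul, norm_pow, Complex.norm_real, Real.norm_of_nonneg hR.le]
    gcongr
  all_goals simp [R]

lemma phi_continuous {a : ℂ} (ha : -1 < a.re) : Continuous (phi a) :=
  continuous_iff_continuousAt.2 fun x => (phi_hasDerivAt ha x).continuousAt

/-- The three-term recurrence, the power series form of `J_{a} + J_{a+2} = 2(a+1)/z J_{a+1}`. -/
lemma phi_recurrence {a : ℂ} (ha : -1 < a.re) (x : ℂ) :
    phi a x = (a + 1) * phi (a + 1) x + x * phi (a + 2) x := by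
  have ha' : -1 < (a + 1).re := by simp; linarith
  have ha'' : -1 < (a + 2).re := by simp; linarith
  have hs1 : Summable fun s : ℕ => (a + 1) * (phiCoeff (a + 1) s * x ^ s) :=
    (phi_summable ha' x).mul_left _
  have hsh : ∀ s : ℕ, ((s + 1 : ℕ) : ℂ) * phiCoeff (a + 1) (s + 1) * x ^ (s + 1)
      = x * (phiCoeff (a + 2) s * x ^ s) := by
    intro s
    have := phiCoeff_succ_mul (a + 1) s
    rw [show a + 1 + 1 = a + 2 by ring] at this
    rw [← this]
    push_cast
    ring
  have hs2 : Summable fun s : ℕ => (s : ℂ) * phiCoeff (a + 1) s * x ^ s := by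
    rw [← summable_nat_add_iff 1]
    simp_rw [hsh]
    exact (phi_summable ha'' x).mul_left _
  have h2 : ∑' s : ℕ, (s : ℂ) * phiCoeff (a + 1) s * x ^ s = x * phi (a + 2) x := by
    rw [hs2.tsum_eq_zero_add]
    simp_rw [hsh]
    simp [phi, tsum_mul_left]
  rw [← h2, phi, phi, ← tsum_mul_left, ← hs1.tsum_add hs2]
  refine tsum_congr fun s => ?_
  rw [phiCoeff_eq ha s]
  ring

lemma besselJ_eq_phi (a : ℂ) {z : ℂ} (hz : z ≠ 0) :
    besselJ a z = (z / 2) ^ a * phi a (-(z / 2) ^ 2) := by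
  have h2 : z / 2 ≠ 0 := div_ne_zero hz two_ne_zero
  rw [besselJ, phi, ← tsum_mul_left]
  refine tsum_congr fun s => ?_
  have : (2 : ℂ) * s = ((2 * s : ℕ) : ℂ) := by push_cast; ring
  rw [Complex.cpow_add _ _ h2, this, Complex.cpow_natCast, pow_mul, neg_pow ((z / 2) ^ 2), phiCoeff]
  ring

lemma ofReal_mul_cpow {t : ℝ} (ht : 0 < t) (z c : ℂ) :
    ((t : ℂ) * z) ^ c = (t : ℂ) ^ c * z ^ c := by
  have ht' : (t : ℂ) ≠ 0 := by exact_mod_cast ht.ne'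
  rcases eq_or_ne z 0 with rfl | hz
  · rcases eq_or_ne c 0 with rfl | hc
    · simp
    · simp [Complex.zero_cpow hc]
  rw [Complex.cpow_def_of_ne_zero (mul_ne_zero ht' hz), Complex.cpow_def_of_ne_zero ht',
    Complex.cpow_def_of_ne_zero hz, Complex.log_ofReal_mul ht hz, Complex.ofReal_log ht.le,
    add_mul, Complex.exp_add]

/-! ### The one-dimensional kernels -/

/-- The continuous extension to `ℝ` of `t ↦ t^{μ+1/2} (tz)^{1/2} J_a(tz)`, `t > 0`. -/
noncomputable def kern (μ z a : ℂ) (t : ℝ) : ℂ :=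
  z ^ (1 / 2 : ℂ) * (z / 2) ^ a * ((t : ℂ) ^ (μ + 1 + a) * phi a (-(t * z / 2) ^ 2))

lemma kern_eq (μ a : ℂ) {z : ℂ} (hz : z ≠ 0) {t : ℝ} (ht : 0 < t) :
    kern μ z a t =
      (t : ℂ) ^ (μ + 1 / 2) * (((t : ℂ) * z) ^ (1 / 2 : ℂ) * besselJ a ((t : ℂ) * z)) := by
  have ht' : (t : ℂ) ≠ 0 := by exact_mod_cast ht.ne'
  have e : μ + 1 + a = (μ + 1 / 2) + 1 / 2 + a := by ring
  rw [besselJ_eq_phi a (mul_ne_zero ht' hz), kern, ofReal_mul_cpow ht, mul_div_assoc,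
    ofReal_mul_cpow ht, e, Complex.cpow_add _ _ ht', Complex.cpow_add _ _ ht']
  ring

lemma kern_continuous {μ a : ℂ} (z : ℂ) (ha : -1 < a.re) (h : 0 < (μ + 1 + a).re) :
    Continuous (kern μ z a) := by
  have := Complex.continuous_ofReal_cpow_const h
  have h2 := phi_continuous ha
  unfold kern
  fun_prop

/-- The Bessel identity `(t^{μ+1} J_{μ+1}(tz))' = z t^{μ+1} J_μ(tz)`. -/
lemma kern_hasDerivAt {μ z : ℂ} (hμ : -1 < μ.re) (hz : z ≠ 0) {t : ℝ} (ht : 0 < t) :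
    HasDerivAt (kern μ z (μ + 1)) (z * kern μ z μ t) t := by
  have hμ' : -1 < (μ + 1).re := by simp; linarith
  have ht' : (t : ℂ) ≠ 0 := by exact_mod_cast ht.ne'
  have hr : μ + 1 + (μ + 1) ≠ 0 := by
    intro h
    have := congrArg Complex.re h
    simp at this
    linarith
  have h1 := hasDerivAt_ofReal_cpow_const ht.ne' hr
  have h2 : HasDerivAt (fun s : ℝ => -((s : ℂ) * z / 2) ^ 2) (-(t * z ^ 2 / 2)) t := by
    have := ((((Complex.ofRealCLM.hasDerivAt (x := t)).mul_const z).div_const 2).pow 2).neg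
    simp only [Complex.ofRealCLM_apply] at this
    convert! this using 1
    simp
    ring
  have h3 := (phi_hasDerivAt hμ' (-((t : ℂ) * z / 2) ^ 2)).comp t h2
  have h4 := (h1.mul h3).const_mul (z ^ (1 / 2 : ℂ) * (z / 2) ^ (μ + 1))
  convert! h4 using 1
  have e1 : (t : ℂ) ^ (μ + 1 + (μ + 1)) = t ^ (μ + 1 + μ) * t := by
    rw [← add_assoc, Complex.cpow_add _ _ ht', Complex.cpow_one]
  have e2 : μ + 1 + (μ + 1) - 1 = μ + 1 + μ := by ring
  rw [e2, e1, kern, phi_recurrence hμ, Complex.cpow_add _ _ (div_ne_zero hz two_ne_zero),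
    Complex.cpow_one, show μ + 1 + 1 = μ + 2 by ring]
  simp only [Function.comp]
  ring

/-! ### Integration by parts on the orthant -/

lemma isOpen_posOrthant (n : ℕ) : IsOpen (posOrthant n) := by
  simp only [posOrthant, Set.ofPred_forall]
  exact isOpen_iInter_of_finite fun i => isOpen_lt continuous_const (continuous_apply i)

/-- `F` vanishes on the part of the orthant outside the cube `(0, ε]ⁿ`. -/
def VanishesBeyond (n : ℕ) (ε : ℝ) (F : (Fin n → ℝ) → ℂ) : Prop :=
  ∀ ω ∈ posOrthant n, (∃ i, ε < ω i) → F ω = 0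

lemma integrableOn_mul {n : ℕ} {ε : ℝ} {F P : (Fin n → ℝ) → ℂ}
    (hF : ContinuousOn F (posOrthant n)) (hz : VanishesBeyond n ε F)
    (hb : ∃ C, ∀ ω ∈ posOrthant n, ‖F ω‖ ≤ C) (hP : Continuous P) :
    IntegrableOn (fun ω => F ω * P ω) (posOrthant n) := by
  obtain ⟨C, hC⟩ := hb
  set K : Set (Fin n → ℝ) := Icc 0 fun _ => ε
  obtain ⟨C', hC'⟩ := (isCompact_Icc : IsCompact K).exists_bound_of_continuousOn hP.continuousOn
  have hm := (isOpen_posOrthant n).measurableSet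
  have hK : MeasurableSet K := measurableSet_Icc
  have h1 : IntegrableOn (fun ω => F ω * P ω) (posOrthant n ∩ K) := by
    refine ⟨((hF.mul hP.continuousOn).mono inter_subset_left).aestronglyMeasurable (hm.inter hK),
      .restrict_of_bounded (C := C * C') ?_ ?_⟩
    · exact (measure_mono inter_subset_right).trans_lt (isCompact_Icc : IsCompact K).measure_lt_top
    · filter_upwards [ae_restrict_mem (hm.inter hK)] with ω hω
      rw [norm_mul]
      exact mul_le_mul (hC ω hω.1) (hC' ω hω.2) (norm_nonneg _)
        ((norm_nonneg _).trans (hC ω hω.1))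
  refine h1.of_forall_sdiff_eq_zero hm fun ω hω => ?_
  have : ∃ i, ε < ω i := by
    by_contra! h
    exact hω.2 ⟨hω.1, fun i => (hω.1 i).le, h⟩
  simp [hz ω hω.1 this]

lemma pDeriv_contDiffOn {n : ℕ} (i : Fin n) {F : (Fin n → ℝ) → ℂ}
    (hF : ContDiffOn ℝ (⊤ : ℕ∞) F (posOrthant n)) :
    ContDiffOn ℝ (⊤ : ℕ∞) (pDeriv n i F) (posOrthant n) :=
  (hF.fderiv_of_isOpen (isOpen_posOrthant n) (by simp)).clm_apply contDiffOn_const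

lemma VanishesBeyond.pDeriv {n : ℕ} {ε : ℝ} {F : (Fin n → ℝ) → ℂ} (hz : VanishesBeyond n ε F)
    (i : Fin n) : VanishesBeyond n ε (pDeriv n i F) := by
  rintro ω hω ⟨j, hj⟩
  have : F =ᶠ[𝓝 ω] fun _ => 0 := by
    filter_upwards [(isOpen_posOrthant n).mem_nhds hω,
      (isOpen_lt continuous_const (continuous_apply j)).mem_nhds hj] with x hx hxj
    exact hz x hx ⟨j, hxj⟩
  simp [_root_.pDeriv, this.fderiv_eq]

/-- Integration by parts in the `i`-th coordinate against a product kernel. The boundary terms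
vanish because `F` is bounded and zero for large `ω_i`, while `b_i(0) = 0`. -/
lemma ibp {m : ℕ} (i : Fin (m + 1)) {ε : ℝ} {F : (Fin (m + 1) → ℝ) → ℂ}
    (hF : ContDiffOn ℝ (⊤ : ℕ∞) F (posOrthant (m + 1))) (hz : VanishesBeyond (m + 1) ε F)
    (hbd : ∃ C, ∀ ω ∈ posOrthant (m + 1), ‖F ω‖ ≤ C)
    (hbd' : ∃ C, ∀ ω ∈ posOrthant (m + 1), ‖pDeriv (m + 1) i F ω‖ ≤ C)
    (b : Fin (m + 1) → ℝ → ℂ) (hb : ∀ k, Continuous (b k)) {b' : ℝ → ℂ} (hb' : Continuous b')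
    (hder : ∀ t : ℝ, 0 < t → HasDerivAt (b i) (b' t) t) (h0 : b i 0 = 0) :
    ∫ ω in posOrthant (m + 1), pDeriv (m + 1) i F ω * ∏ k, b k (ω k)
      = -∫ ω in posOrthant (m + 1), F ω * ∏ k, Function.update b i b' k (ω k) := by
  have hopen := isOpen_posOrthant (m + 1)
  have hP : Continuous fun ω : Fin (m + 1) → ℝ => ∏ k, b k (ω k) :=
    continuous_finsetProd _ fun k _ => (hb k).comp (continuous_apply k)
  have hP' : Continuous fun ω : Fin (m + 1) → ℝ => ∏ k, Function.update b i b' k (ω k) := by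
    refine continuous_finsetProd _ fun k _ => Continuous.comp ?_ (continuous_apply k)
    rcases eq_or_ne k i with rfl | hk
    · simpa using hb'
    · simpa [hk] using hb k
  have hI1 := integrableOn_mul (pDeriv_contDiffOn i hF).continuousOn (hz.pDeriv i) hbd' hP
  have hI2 := integrableOn_mul hF.continuousOn hz hbd hP'
  rw [eq_neg_iff_add_eq_zero, ← integral_add hI1 hI2]
  set H : (Fin (m + 1) → ℝ) → ℂ := fun ω => pDeriv (m + 1) i F ω * ∏ k, b k (ω k)
    + F ω * ∏ k, Function.update b i b' k (ω k) with hH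
  have hI : IntegrableOn H (posOrthant (m + 1)) := hI1.add hI2
  -- Fubini, isolating the `i`-th coordinate.
  let e := MeasurableEquiv.piFinSuccAbove (fun _ : Fin (m + 1) => ℝ) i
  have he : MeasurePreserving e := volume_preserving_piFinSuccAbove _ i
  let G : ℝ × (Fin m → ℝ) → ℂ := fun p => H (i.insertNth p.1 p.2)
  have hGe : ∀ ω, G (e ω) = H ω := fun ω => congrArg H (e.symm_apply_apply ω)
  have hpre : e ⁻¹' (Ioi 0 ×ˢ posOrthant m) = posOrthant (m + 1) := by
    ext ω
    simp only [posOrthant, mem_preimage, mem_prod, mem_Ioi, mem_ofPred_eq, i.forall_iff_succAbove]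
    rfl
  have hG : IntegrableOn G (Ioi 0 ×ˢ posOrthant m) := by
    rw [← he.integrableOn_comp_preimage e.measurableEmbedding, hpre]
    exact hI.congr_fun (fun ω _ => (hGe ω).symm) hopen.measurableSet
  have hGint : ∫ ω in posOrthant (m + 1), H ω = ∫ p in Ioi 0 ×ˢ posOrthant m, G p := by
    rw [← he.setIntegral_preimage_emb e.measurableEmbedding, hpre]
    exact setIntegral_congr_fun hopen.measurableSet fun ω _ => (hGe ω).symm
  rw [hGint]
  rw [IntegrableOn, Measure.volume_eq_prod, ← Measure.prod_restrict] at hG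
  rw [Measure.volume_eq_prod, ← Measure.prod_restrict, integral_prod_symm _ hG]
  refine integral_eq_zero_of_ae ?_
  filter_upwards [hG.prod_left_ae, ae_restrict_mem (isOpen_posOrthant m).measurableSet]
    with y hint hy
  have hins : ∀ x : ℝ, 0 < x → i.insertNth x y ∈ posOrthant (m + 1) := by
    intro x hx
    simp only [posOrthant, mem_ofPred_eq, i.forall_iff_succAbove, Fin.insertNth_apply_same,
      Fin.insertNth_apply_succAbove]
    exact ⟨hx, hy⟩
  set c : ℂ := ∏ j, b (i.succAbove j) (y j) with hc
  have hprod : ∀ x : ℝ, ∏ k, b k ((i.insertNth x y : Fin (m + 1) → ℝ) k) = b i x * c := by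
    intro x
    simp [Fin.prod_univ_succAbove _ i, hc]
  have hprod' : ∀ x : ℝ,
      ∏ k, Function.update b i b' k ((i.insertNth x y : Fin (m + 1) → ℝ) k) = b' x * c := by
    intro x
    simp [Fin.prod_univ_succAbove _ i, hc]
  have hGx : ∀ x : ℝ, G (x, y) = pDeriv (m + 1) i F (i.insertNth x y) * (b i x * c)
      + F (i.insertNth x y) * (b' x * c) := by
    intro x
    simp only [G, hH, hprod, hprod']
  have hu : ∀ x ∈ Ioi (0 : ℝ), HasDerivAt (fun x : ℝ => F (i.insertNth x y))
      (pDeriv (m + 1) i F (i.insertNth x y)) x := by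
    intro x hx
    have hd : HasFDerivAt F (fderiv ℝ F (i.insertNth x y)) (i.insertNth x y) :=
      ((hF.contDiffAt (hopen.mem_nhds (hins x hx))).differentiableAt (by simp)).hasFDerivAt
    refine hd.comp_hasDerivAt x (f := fun x : ℝ => (i.insertNth x y : Fin (m + 1) → ℝ)) ?_
    rw [hasDerivAt_pi]
    refine i.forall_iff_succAbove.2 ⟨?_, fun j => ?_⟩
    · simpa using hasDerivAt_id' x
    · simpa using hasDerivAt_const x (y j)
  have hv : ∀ x ∈ Ioi (0 : ℝ), HasDerivAt (fun x : ℝ => b i x * c) (b' x * c) x :=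
    fun x hx => (hder x hx).mul_const c
  have hzero : Tendsto ((fun x : ℝ => F (i.insertNth x y)) * fun x : ℝ => b i x * c) (𝓝[>] 0)
      (𝓝 0) := by
    obtain ⟨C, hC⟩ := hbd
    have hlim : Tendsto (fun x : ℝ => C * ‖b i x * c‖) (𝓝[>] 0) (𝓝 0) := by
      have : Continuous fun x : ℝ => C * ‖b i x * c‖ := by
        have := hb i
        fun_prop
      have h := this.tendsto 0
      rw [h0] at h
      simp only [zero_mul, norm_zero, mul_zero] at h
      exact h.mono_left nhdsWithin_le_nhds
    refine squeeze_zero_norm' ?_ hlim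
    filter_upwards [self_mem_nhdsWithin] with x hx
    rw [Pi.mul_apply, norm_mul]
    exact mul_le_mul_of_nonneg_right (hC _ (hins x hx)) (norm_nonneg _)
  have hinf : Tendsto ((fun x : ℝ => F (i.insertNth x y)) * fun x : ℝ => b i x * c) atTop
      (𝓝 0) := by
    refine tendsto_const_nhds.congr' ?_
    filter_upwards [eventually_gt_atTop 0, eventually_gt_atTop ε] with x hx hxε
    rw [Pi.mul_apply, hz _ (hins x hx) ⟨i, by simpa using hxε⟩, zero_mul]
  have key := integral_Ioi_deriv_mul_eq_sub hu hv
    (hint.congr (Eventually.of_forall fun x => hGx x)) hzero hinf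
  simp only [hGx, key, sub_zero, Pi.zero_apply]

/-! ### Iterated derivatives -/

/-- Iterated partial derivatives along a list of coordinates. -/
noncomputable def listD (n : ℕ) (l : List (Fin n)) (f : (Fin n → ℝ) → ℂ) : (Fin n → ℝ) → ℂ :=
  l.foldr (fun i g => pDeriv n i g) f

/-- Iterated operators `ω_i⁻¹ ∂/∂ω_i` along a list of coordinates. -/
noncomputable def listW (n : ℕ) (l : List (Fin n)) (f : (Fin n → ℝ) → ℂ) : (Fin n → ℝ) → ℂ :=
  l.foldr (fun i g => wDeriv n i g) f

lemma listD_contDiffOn {n : ℕ} (l : List (Fin n)) {f : (Fin n → ℝ) → ℂ}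
    (hf : ContDiffOn ℝ (⊤ : ℕ∞) f (posOrthant n)) :
    ContDiffOn ℝ (⊤ : ℕ∞) (listD n l f) (posOrthant n) := by
  induction l with
  | nil => exact hf
  | cons i l ih => exact pDeriv_contDiffOn i ih

lemma VanishesBeyond.listD {n : ℕ} {ε : ℝ} (l : List (Fin n)) {f : (Fin n → ℝ) → ℂ}
    (hf : VanishesBeyond n ε f) : VanishesBeyond n ε (listD n l f) := by
  induction l with
  | nil => exact hf
  | cons i l ih => exact ih.pDeriv i

lemma differentiableAt_prod_inv {n : ℕ} (l : List (Fin n)) {ω : Fin n → ℝ}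
    (hω : ω ∈ posOrthant n) :
    DifferentiableAt ℝ (fun x : Fin n → ℝ => (l.map fun i => (x i)⁻¹).prod) ω := by
  induction l with
  | nil => simp
  | cons i l ih =>
    simp only [List.map_cons, List.prod_cons]
    have h : DifferentiableAt ℝ (fun x : Fin n → ℝ => x i) ω := differentiableAt_apply i ω
    exact (h.fun_inv (hω i).ne').mul ih

/-- Since the factor `ω_j⁻¹` is constant in the direction `e_i` for `i ≠ j`, all the weights can
be pulled out in front. -/
lemma listW_eq {n : ℕ} {l : List (Fin n)} (hl : l.Nodup) {f : (Fin n → ℝ) → ℂ}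
    (hf : ContDiffOn ℝ (⊤ : ℕ∞) f (posOrthant n)) :
    ∀ ω ∈ posOrthant n, listW n l f ω = (l.map fun i => (ω i)⁻¹).prod • listD n l f ω := by
  induction l with
  | nil => intro ω _; simp [listW, listD]
  | cons i l ih =>
    intro ω hω
    obtain ⟨hi, hl'⟩ := List.nodup_cons.1 hl
    have hopen := isOpen_posOrthant n
    have hev : listW n l f =ᶠ[𝓝 ω]
        fun x => (l.map fun i => (x i)⁻¹).prod • listD n l f x := by
      filter_upwards [hopen.mem_nhds hω] with x hx using ih hl' x hx
    have hc := differentiableAt_prod_inv l hω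
    have hd : DifferentiableAt ℝ (listD n l f) ω :=
      ((listD_contDiffOn l hf).contDiffAt (hopen.mem_nhds hω)).differentiableAt (by simp)
    have hc0 : fderiv ℝ (fun x : Fin n → ℝ => (l.map fun i => (x i)⁻¹).prod) ω
        (Pi.single i 1) = 0 := by
      rw [← hc.lineDeriv_eq_fderiv, lineDeriv]
      have : (fun t : ℝ => (l.map fun j => ((ω + t • (Pi.single i (1 : ℝ) : Fin n → ℝ)) j)⁻¹).prod)
          = fun _ => (l.map fun j => (ω j)⁻¹).prod := by
        funext t
        congr 1
        refine List.map_congr_left fun j hj => ?_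
        have : j ≠ i := fun h => hi (h ▸ hj)
        simp [this]
      rw [this, deriv_const]
    change (ω i)⁻¹ • fderiv ℝ (listW n l f) ω (Pi.single i 1) = _
    rw [hev.fderiv_eq, fderiv_fun_smul hc hd]
    simp only [List.map_cons, List.prod_cons, mul_smul]
    simp [hc0, listD, pDeriv]

lemma foldr_wDeriv_zero {n : ℕ} {p : Fin n → ℕ} {l : List (Fin n)} (h : ∀ i ∈ l, p i = 0)
    (f : (Fin n → ℝ) → ℂ) : l.foldr (fun i g => (wDeriv n i)^[p i] g) f = f := by
  induction l with
  | nil => rfl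
  | cons i l ih =>
    simp only [List.mem_cons, forall_eq_or_imp] at h
    simp [h.1, ih h.2]

lemma foldr_wDeriv_one {n : ℕ} {p : Fin n → ℕ} {l : List (Fin n)} (h : ∀ i ∈ l, p i = 1)
    (f : (Fin n → ℝ) → ℂ) : l.foldr (fun i g => (wDeriv n i)^[p i] g) f = listW n l f := by
  induction l with
  | nil => rfl
  | cons i l ih =>
    simp only [List.mem_cons, forall_eq_or_imp] at h
    simp only [List.foldr_cons, ih h.2, h.1]
    rfl

lemma multiWDeriv_indicator {n : ℕ} {l : List (Fin n)} (hl : l <:+ List.finRange n)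
    (f : (Fin n → ℝ) → ℂ) :
    multiWDeriv n (fun i => if i ∈ l then 1 else 0) f = listW n l f := by
  obtain ⟨l', h⟩ := hl
  have hnd := List.nodup_finRange n
  rw [← h] at hnd
  rw [multiWDeriv, ← h, List.foldr_append, foldr_wDeriv_zero, foldr_wDeriv_one]
  · intro i hi; simp [hi]
  · intro i hi
    have : i ∉ l := fun h' => (List.disjoint_of_nodup_append hnd) hi h'
    simp [this]

/-- Finiteness of the seminorms with `p ∈ {0,1}ⁿ` makes the plain mixed derivatives bounded,
because the weights `∏ ω_i` are bounded on the cube supporting `f`. -/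
lemma listD_bounded {n : ℕ} {ε : ℝ} {μ : ℂ} {ζ : (Fin n → ℝ) → ℂ} {l : List (Fin n)}
    (hl : l <:+ List.finRange n)
    (hg : ContDiffOn ℝ (⊤ : ℕ∞) (weightFn n μ ζ) (posOrthant n))
    (hz : VanishesBeyond n ε (weightFn n μ ζ)) (hT : ∀ p, Tsem n μ p ζ < ⊤) :
    ∃ C, ∀ ω ∈ posOrthant n, ‖listD n l (weightFn n μ ζ) ω‖ ≤ C := by
  have hnd : l.Nodup := hl.sublist.nodup (List.nodup_finRange n)
  set p : Fin n → ℕ := fun i => if i ∈ l then 1 else 0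
  have hcont : Continuous fun ω : Fin n → ℝ => (l.map fun i => ω i).prod :=
    continuous_list_prod _ fun i _ => continuous_apply i
  obtain ⟨C, hC⟩ := (isCompact_Icc :
    IsCompact (Icc (0 : Fin n → ℝ) fun _ => ε)).exists_bound_of_continuousOn hcont.continuousOn
  refine ⟨max 0 (C * (Tsem n μ p ζ).toReal), fun ω hω => ?_⟩
  by_cases h : ∃ i, ε < ω i
  · rw [hz.listD l ω hω h, norm_zero]
    exact le_max_left _ _
  push Not at h
  refine le_trans ?_ (le_max_right _ _)
  have hW := listW_eq hnd hg ω hω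
  have hD : listD n l (weightFn n μ ζ) ω
      = (l.map fun i => ω i).prod • listW n l (weightFn n μ ζ) ω := by
    have hne : (l.map fun i => ω i).prod ≠ 0 := by
      rw [Ne, List.prod_eq_zero_iff]
      simp only [List.mem_map, not_exists, not_and]
      exact fun i _ => (hω i).ne'
    have hinv : (l.map fun i => (ω i)⁻¹).prod = ((l.map fun i => ω i).prod)⁻¹ := by
      rw [List.prod_inv, List.map_map]; rfl
    rw [hW, hinv, smul_inv_smul₀ hne]
  have hWle : ‖listW n l (weightFn n μ ζ) ω‖ ≤ (Tsem n μ p ζ).toReal := by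
    rw [← multiWDeriv_indicator hl, ← coe_nnnorm, ← ENNReal.coe_toReal]
    refine ENNReal.toReal_mono (hT p).ne ?_
    exact le_iSup₂ (f := fun ω (_ : ω ∈ posOrthant n) =>
      (‖multiWDeriv n p (weightFn n μ ζ) ω‖₊ : ℝ≥0∞)) ω hω
  have hCω := hC ω ⟨fun i => (hω i).le, h⟩
  rw [hD, norm_smul]
  exact mul_le_mul hCω hWle (norm_nonneg _) ((norm_nonneg _).trans hCω)

/-- Iterating the integration by parts over the coordinates in `l`: `B k` is the kernel before,
`B' k` the kernel after differentiation in the `k`-th coordinate. -/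
lemma ibp_list {n : ℕ} {ε : ℝ} {g : (Fin n → ℝ) → ℂ}
    (hg : ContDiffOn ℝ (⊤ : ℕ∞) g (posOrthant n)) (hz : VanishesBeyond n ε g)
    (hbd : ∀ l, l <:+ List.finRange n → ∃ C, ∀ ω ∈ posOrthant n, ‖listD n l g ω‖ ≤ C)
    (B B' : Fin n → ℝ → ℂ) (hB : ∀ k, Continuous (B k)) (hB' : ∀ k, Continuous (B' k))
    (hder : ∀ k, ∀ t : ℝ, 0 < t → HasDerivAt (B k) (B' k t) t) (h0 : ∀ k, B k 0 = 0)
    (l : List (Fin n)) (hl : l <:+ List.finRange n) :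
    ∫ ω in posOrthant n, listD n l g ω * ∏ k, (if k ∈ l then B k else B' k) (ω k)
      = (-1) ^ l.length * ∫ ω in posOrthant n, g ω * ∏ k, B' k (ω k) := by
  induction l with
  | nil => simp [listD]
  | cons i l ih =>
    have hl' : l <:+ List.finRange n := (List.suffix_cons i l).trans hl
    have hnd : (i :: l).Nodup := hl.sublist.nodup (List.nodup_finRange n)
    have hi : i ∉ l := (List.nodup_cons.1 hnd).1
    obtain ⟨m, rfl⟩ : ∃ m, n = m + 1 := ⟨n - 1, by have := i.2; omega⟩
    have h := ibp i (listD_contDiffOn l hg) (hz.listD l) (hbd l hl') (hbd (i :: l) hl)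
      (fun k => if k ∈ i :: l then B k else B' k)
      (fun k => by split_ifs <;> [exact hB k; exact hB' k]) (hB' i)
      (by simpa using hder i) (by simpa using h0 i)
    have hup : Function.update (fun k => if k ∈ i :: l then B k else B' k) i (B' i)
        = fun k => if k ∈ l then B k else B' k := by
      funext k
      rcases eq_or_ne k i with rfl | hk
      · simp [hi]
      · simp [hk]
    rw [hup, ih hl'] at h
    rw [List.length_cons, pow_succ, mul_neg_one, neg_mul]
    exact h

/-! ### The weight -/

lemma ofReal_prod_cpow {n : ℕ} {ω : Fin n → ℝ} (hω : ω ∈ posOrthant n) (c : ℂ) :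
    ((∏ i, ω i : ℝ) : ℂ) ^ c = ∏ i, (ω i : ℂ) ^ c := by
  have : ∀ s : Finset (Fin n), ((∏ i ∈ s, ω i : ℝ) : ℂ) ^ c = ∏ i ∈ s, (ω i : ℂ) ^ c := by
    intro s
    induction s using Finset.induction_on with
    | empty => simp
    | insert i s hi ih =>
      rw [Finset.prod_insert hi, Finset.prod_insert hi, Complex.ofReal_mul,
        Complex.mul_cpow_ofReal_nonneg (hω i).le (Finset.prod_nonneg fun j _ => (hω j).le), ih]
  exact this _

lemma weightFn_contDiffOn {n : ℕ} (μ : ℂ) {f : (Fin n → ℝ) → ℂ}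
    (hf : ContDiffOn ℝ (⊤ : ℕ∞) f (posOrthant n)) :
    ContDiffOn ℝ (⊤ : ℕ∞) (weightFn n μ f) (posOrthant n) := by
  have hpos : ∀ ω ∈ posOrthant n, 0 < ∏ i, ω i :=
    fun ω hω => Finset.prod_pos fun i _ => hω i
  have h1 : ContDiffOn ℝ (⊤ : ℕ∞) (fun ω : Fin n → ℝ => Real.log (∏ i, ω i)) (posOrthant n) :=
    (contDiff_prod fun i _ => contDiff_apply ℝ ℝ i).contDiffOn.log fun ω hω => (hpos ω hω).ne'
  have h2 : ContDiffOn ℝ (⊤ : ℕ∞)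
      (fun ω : Fin n → ℝ => Complex.exp ((Real.log (∏ i, ω i) : ℂ) * (-μ - 1 / 2)))
      (posOrthant n) :=
    ((Complex.ofRealCLM.contDiff.comp_contDiffOn h1).mul contDiffOn_const).cexp
  refine (h2.mul hf).congr fun ω hω => ?_
  have hne : ((∏ i, ω i : ℝ) : ℂ) ≠ 0 := by exact_mod_cast (hpos ω hω).ne'
  rw [weightFn, Complex.cpow_def_of_ne_zero hne, Complex.ofReal_log (hpos ω hω).le]

end

/-- operational rule `ℋ_{μ+1}(N_μ ζ)(Z) = (−1)ⁿ [Z] ℋ_μ(ζ)(Z)` for the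
`n`-dimensional Hankel transformation, where `μ = ν + σ`. -/
theorem hankel_Nop_rule (n : ℕ) (hn : 1 ≤ n) (ε : ℝ) (hε : 0 < ε)
    (σ : ℝ) (hσ : 0 < σ) (ν : ℂ) (hν : -(1 / 2 : ℝ) ≤ ν.re)
    (ζ : (Fin n → ℝ) → ℂ) (hζ : memA n ε (ν + σ) ζ)
    (Z : Fin n → ℂ) (hZ : ∀ k, Z k ∈ Complex.slitPlane) :
    (∫ ω in posOrthant n, Nop n (ν + σ) ζ ω *
        ∏ k, ((ω k : ℂ) * Z k) ^ (1 / 2 : ℂ) * besselJ (ν + σ + 1) ((ω k : ℂ) * Z k))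
      = (-1 : ℂ) ^ n * (∏ k, Z k) *
        ∫ ω in posOrthant n, ζ ω *
          ∏ k, ((ω k : ℂ) * Z k) ^ (1 / 2 : ℂ) * besselJ (ν + σ) ((ω k : ℂ) * Z k) := by
  have hμ : -(1 / 2) < (ν + σ).re := by
    rw [Complex.add_re, Complex.ofReal_re]; linarith
  generalize ν + (σ : ℂ) = μ at *
  obtain ⟨hsm, hvan, hT⟩ := hζ
  have hZ0 : ∀ k, Z k ≠ 0 := fun k => Complex.slitPlane_ne_zero (hZ k)
  set g := weightFn n μ ζ with hgdef
  have hg : ContDiffOn ℝ (⊤ : ℕ∞) g (posOrthant n) := weightFn_contDiffOn μ hsm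
  have hz : VanishesBeyond n ε g := fun ω hω h => by
    rw [hgdef, weightFn, hvan ω hω h, mul_zero]
  have hμ1 : -1 < μ.re := by linarith
  have hμ2 : -1 < (μ + 1).re := by simp; linarith
  have hc0 : 0 < (μ + 1 + μ).re := by simp; linarith
  have hc1 : 0 < (μ + 1 + (μ + 1)).re := by simp; linarith
  have key := ibp_list hg hz (fun l hl => listD_bounded hl hg hz hT)
    (fun k => kern μ (Z k) (μ + 1)) (fun k t => Z k * kern μ (Z k) μ t)
    (fun k => kern_continuous (Z k) hμ2 hc1)
    (fun k => continuous_const.mul (kern_continuous (Z k) hμ1 hc0))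
    (fun k t ht => kern_hasDerivAt hμ1 (hZ0 k) ht)
    (fun k => by
      have : μ + 1 + (μ + 1) ≠ 0 := fun h => by rw [h] at hc1; simp at hc1
      simp [kern, Complex.zero_cpow this])
    (List.finRange n) List.suffix_rfl
  simp only [List.mem_finRange, if_true, List.length_finRange] at key
  have hm := (isOpen_posOrthant n).measurableSet
  have hL : ∀ ω ∈ posOrthant n, Nop n μ ζ ω *
        ∏ k, ((ω k : ℂ) * Z k) ^ (1 / 2 : ℂ) * besselJ (μ + 1) ((ω k : ℂ) * Z k)
      = listD n (List.finRange n) g ω * ∏ k, kern μ (Z k) (μ + 1) (ω k) := by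
    intro ω hω
    simp only [fun k => kern_eq μ (μ + 1) (hZ0 k) (hω k)]
    rw [Finset.prod_mul_distrib (f := fun k => (ω k : ℂ) ^ (μ + 1 / 2)), Nop,
      ofReal_prod_cpow hω]
    change _ * listD n (List.finRange n) g ω * _ = _
    ring
  have hR : ∀ ω ∈ posOrthant n, g ω * ∏ k, Z k * kern μ (Z k) μ (ω k)
      = (∏ k, Z k) * (ζ ω *
        ∏ k, ((ω k : ℂ) * Z k) ^ (1 / 2 : ℂ) * besselJ μ ((ω k : ℂ) * Z k)) := by
    intro ω hω
    have hne : ((∏ i, ω i : ℝ) : ℂ) ≠ 0 := by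
      exact_mod_cast (Finset.prod_pos fun i _ => hω i).ne'
    have hw : ((∏ i, ω i : ℝ) : ℂ) ^ (-μ - 1 / 2) * ((∏ i, ω i : ℝ) : ℂ) ^ (μ + 1 / 2) = 1 := by
      rw [← Complex.cpow_add _ _ hne, show -μ - 1 / 2 + (μ + 1 / 2) = 0 by ring,
        Complex.cpow_zero]
    simp only [fun k => kern_eq μ μ (hZ0 k) (hω k)]
    rw [Finset.prod_mul_distrib, Finset.prod_mul_distrib (f := fun k => (ω k : ℂ) ^ (μ + 1 / 2)),
      ← ofReal_prod_cpow hω, hgdef, weightFn]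
    linear_combination (ζ ω * (∏ k, Z k) *
      ∏ k, ((ω k : ℂ) * Z k) ^ (1 / 2 : ℂ) * besselJ μ ((ω k : ℂ) * Z k)) * hw
  rw [setIntegral_congr_fun hm hL, key, setIntegral_congr_fun hm hR, integral_const_mul, mul_assoc]
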